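/- arXiv:2408.00390 — 3 statements merged into one kernel-verified Lean document; each statement's English description precedes it below -/
import Mathlib

section
/- Let n ≥ 4 be even. The characteristic polynomial of the adjacency matrix of the graph K_2 ∨ ((n/2)·K_2 ⊔ K_{n-2}) on 2n vertices is (x-1)^(n/2 - 1)·(x+1)^(3n/2 - 2)·(x³ - (n-1)x² - (2n+1)x + 2n² - 5n - 1). -/
/-!
The closed neighbourhood of a vertex depends only on the clique (cone `K_2`, big clique `K_{n-2}`,
or one of the `n/2` small `K_2`s) containing it. So, writing `n = 2m`, the matrix `A + 1` is
the pullback of an `(m+2) × (m+2)` matrix `M` along the map sending a vertex to its clique. For any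
pullback of `M` along `f : ι → κ` with fibre sizes `c`, let `F` be the `ι × κ` incidence matrix of
`f`; then `M.submatrix f f = (F M) Fᵀ` and `Fᵀ (F M) = diagonal c * M`, so comparing the
characteristic polynomials of the two products of `F M` and `Fᵀ` gives
`charpoly (M.submatrix f f) = X ^ (|ι| - |κ|) * charpoly (diagonal c * M)`
(`charpoly_submatrix_of_card_fiber`). Applied to `A + 1`, this produces the factor
`X ^ (3m - 2)` and the matrix `diagonal c * M`. The latter minus `2` is again a pullback, now of a
`3 × 3` matrix along the map identifying all the small cliques, so the same lemma produces
the factor `X ^ (m - 1)` and a `3 × 3` determinant. Undoing the two shifts gives the claim.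
-/

open Matrix Polynomial

/-- Adjacency matrix of the graph `K_2 ∨ ((n/2)·K_2 ⊔ K_{n-2})` on `2n` vertices
(for even `n`): vertices `0, 1` form the cone `K_2` (adjacent to everything),
vertices `2, …, n-1` form `K_{n-2}`, and vertices `n, …, 2n-1` are paired into
`n/2` copies of `K_2` (the pairs `{2m, 2m+1}`). -/
def adjJoinEven (n : ℕ) : Matrix (Fin (2 * n)) (Fin (2 * n)) ℝ :=
  Matrix.of fun i j =>
    if i ≠ j ∧ (i.val < 2 ∨ j.val < 2 ∨ (i.val < n ∧ j.val < n) ∨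
        (n ≤ i.val ∧ n ≤ j.val ∧ i.val / 2 = j.val / 2)) then 1 else 0

/-- If `f : ι → κ` has fibres of sizes `c`, then the pullback of a matrix `M` along `f` has, up to
a power of `X`, the characteristic polynomial of the quotient matrix `diagonal c * M`. -/
theorem charpoly_submatrix_of_card_fiber {ι κ : Type*} [Fintype ι] [DecidableEq ι] [Fintype κ]
    [DecidableEq κ] (M : Matrix κ κ ℝ) (f : ι → κ) (c : κ → ℕ)
    (hc : ∀ k, (Finset.univ.filter fun i => f i = k).card = c k)
    (hle : Fintype.card κ ≤ Fintype.card ι) :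
    (M.submatrix f f).charpoly = X ^ (Fintype.card ι - Fintype.card κ) *
      (diagonal (fun k => (c k : ℝ)) * M).charpoly := by
  have h := charpoly_mul_comm_of_le (M.submatrix f id)
    ((1 : Matrix κ κ ℝ).submatrix id f) hle
  have h1 : M.submatrix f id * (1 : Matrix κ κ ℝ).submatrix id f = M.submatrix f f := by
    ext i j
    simp [Matrix.mul_apply, Matrix.one_apply]
  have h2 : (1 : Matrix κ κ ℝ).submatrix id f * M.submatrix f id
      = diagonal (fun k => (c k : ℝ)) * M := by
    ext i j
    rw [diagonal_mul, ← hc, Matrix.mul_apply, Finset.card_filter, Nat.cast_sum, Finset.sum_mul]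
    refine Finset.sum_congr rfl fun x _ => ?_
    by_cases hx : i = f x
    · simp [Matrix.one_apply, hx]
    · simp [hx, Ne.symm hx]
  rw [h1, h2] at h
  exact h

theorem card_filter_val_interval (N a b : ℕ) (hb : b ≤ N) :
    (Finset.univ.filter fun i : Fin N => a ≤ i.val ∧ i.val < b).card = b - a := by
  rw [← Nat.card_Ico, ← Finset.card_map Fin.valEmbedding]
  congr 1
  ext x
  simp only [Finset.mem_map, Finset.mem_filter, Finset.mem_univ, true_and, Finset.mem_Ico,
    Fin.valEmbedding_apply]
  constructor
  · rintro ⟨i, hi, rfl⟩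
    exact hi
  · intro hx
    exact ⟨⟨x, by omega⟩, hx, rfl⟩

/-- The index of the clique containing a vertex (for `n = m + m`): `0` for the cone, `1` for
`K_{n-2}`, and `2, …, m + 1` for the `m` copies of `K_2`. -/
def cliqueIndex (m : ℕ) (i : Fin (2 * (m + m))) : Fin (m + 2) :=
  ⟨if i.val < 2 then 0 else if i.val < m + m then 1 else i.val / 2 - m + 2, by
    have := i.isLt
    split_ifs <;> omega⟩

/-- The number of vertices in each clique. -/
def cliqueSize (m : ℕ) (k : Fin (m + 2)) : ℕ := if k.val = 1 then m + m - 2 else 2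

/-- The reflexive adjacency matrix between cliques: distinct cliques are completely joined when
one of them is the cone, and have no edges between them otherwise. -/
def cliqueMatrix (m : ℕ) : Matrix (Fin (m + 2)) (Fin (m + 2)) ℝ :=
  Matrix.of fun a b => if a = b ∨ a.val = 0 ∨ b.val = 0 then 1 else 0

/-- The type of a clique: `0` for the cone, `1` for `K_{n-2}`, `2` for any copy of `K_2`. -/
def cliqueType (m : ℕ) (k : Fin (m + 2)) : Fin 3 :=
  if k.val = 0 then 0 else if k.val = 1 then 1 else 2

/-- The matrix on clique types whose pullback is `diagonal (cliqueSize m) * cliqueMatrix m - 2`. -/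
def typeMatrix (m : ℕ) : Matrix (Fin 3) (Fin 3) ℝ :=
  !![0, 2, 2; 2 * m - 2, 2 * m - 4, 0; 2, 0, 0]

theorem card_cliqueIndex_fiber (m : ℕ) (hm : 2 ≤ m) (k : Fin (m + 2)) :
    (Finset.univ.filter fun i => cliqueIndex m i = k).card = cliqueSize m k := by
  obtain ⟨k, hk⟩ := k
  have key : ∀ a b : ℕ, b ≤ 2 * (m + m) →
      (∀ i : Fin (2 * (m + m)), (cliqueIndex m i).val = k ↔ a ≤ i.val ∧ i.val < b) →
      (Finset.univ.filter fun i => cliqueIndex m i = ⟨k, hk⟩).card = b - a := by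
    intro a b hb h
    rw [← card_filter_val_interval _ a b hb]
    simp only [Fin.ext_iff, h]
  simp only [cliqueSize]
  rcases Nat.lt_or_ge k 2 with h2 | h2
  · interval_cases k
    · rw [key 0 2 (by omega)]
      · simp
      · intro i
        simp only [cliqueIndex]
        split_ifs <;> first | omega | (simp; omega)
    · rw [key 2 (m + m) (by omega)]
      · simp
      · intro i
        simp only [cliqueIndex]
        split_ifs <;> first | omega | (simp; omega)
  · rw [key (2 * (k - 2 + m)) (2 * (k - 2 + m) + 2) (by omega), if_neg (by omega)]
    · omega
    · intro i
      simp only [cliqueIndex]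
      split_ifs <;> omega

theorem card_cliqueType_fiber (m : ℕ) (k : Fin 3) :
    (Finset.univ.filter fun i => cliqueType m i = k).card = ![1, 1, m] k := by
  have key : ∀ a b : ℕ, b ≤ m + 2 →
      (∀ i : Fin (m + 2), cliqueType m i = k ↔ a ≤ i.val ∧ i.val < b) →
      (Finset.univ.filter fun i => cliqueType m i = k).card = b - a := by
    intro a b hb h
    rw [← card_filter_val_interval _ a b hb]
    simp only [h]
  fin_cases k
  · rw [key 0 1 (by omega)]
    · simp
    · rintro ⟨i, hi⟩
      simp only [cliqueType]
      split_ifs <;> simp <;> omega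
  · rw [key 1 2 (by omega)]
    · simp
    · rintro ⟨i, hi⟩
      simp only [cliqueType]
      split_ifs <;> simp <;> omega
  · rw [key 2 (m + 2) (by omega)]
    · simp
    · rintro ⟨i, hi⟩
      simp only [cliqueType]
      split_ifs <;> simp <;> omega

theorem adjJoinEven_eq_submatrix_sub (m : ℕ) :
    adjJoinEven (m + m) =
      (cliqueMatrix m).submatrix (cliqueIndex m) (cliqueIndex m) - scalar _ 1 := by
  ext i j
  have hi := i.isLt
  have hj := j.isLt
  by_cases hij : i = j
  · subst hij
    simp [adjJoinEven, cliqueMatrix]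
  · have hv : i.val ≠ j.val := fun h => hij (Fin.ext h)
    simp only [adjJoinEven, cliqueMatrix, of_apply, Matrix.sub_apply, submatrix_apply, scalar_apply,
      diagonal_apply_ne _ hij, sub_zero]
    congr 1
    simp only [cliqueIndex, Fin.mk.injEq, ne_eq, hij, not_false_eq_true, true_and, eq_iff_iff]
    split_ifs <;> first | omega | (simp; omega)

theorem diagonal_mul_cliqueMatrix (m : ℕ) (hm : 2 ≤ m) :
    diagonal (fun k => (cliqueSize m k : ℝ)) * cliqueMatrix m =
      (typeMatrix m).submatrix (cliqueType m) (cliqueType m) - scalar _ (-2) := by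
  have hc : ((m + m - 2 : ℕ) : ℝ) = 2 * m - 2 := by
    rw [Nat.cast_sub (by omega)]
    push_cast
    ring
  ext a b
  rw [diagonal_mul]
  rcases a with ⟨_ | _ | a, ha⟩ <;> rcases b with ⟨_ | _ | b, hb⟩ <;>
    simp [cliqueSize, cliqueMatrix, typeMatrix, cliqueType, diagonal_apply, hc]
  · ring
  · split_ifs <;> simp

theorem charpoly_diagonal_mul_typeMatrix (m : ℕ) :
    (diagonal (fun k => ((![1, 1, m] k : ℕ) : ℝ)) * typeMatrix m).charpoly =
      X ^ 3 - C (2 * (m : ℝ) - 4) * X ^ 2 - C (8 * (m : ℝ) - 4) * X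
        + C (4 * (m : ℝ) * (2 * m - 4)) := by
  have h2 : C (2 : ℝ) = 2 := map_ofNat C 2
  have h4 : C (4 : ℝ) = 4 := map_ofNat C 4
  have h8 : C (8 : ℝ) = 8 := map_ofNat C 8
  simp only [Matrix.charpoly, det_fin_three, charmatrix_apply, diagonal_mul, typeMatrix]
  simp [h2, h4, h8]
  ring

/-- For even `n ≥ 4`, the characteristic polynomial of the adjacency matrix of
`K_2 ∨ ((n/2)·K_2 ⊔ K_{n-2})` is
`(x-1)^(n/2-1) (x+1)^(3n/2-2) (x³ - (n-1)x² - (2n+1)x + 2n² - 5n - 1)`. -/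
theorem charpoly_ESCom_dihedral_even (n : ℕ) (hn : 4 ≤ n) (heven : Even n) :
    (adjJoinEven n).charpoly =
      (X - 1) ^ (n / 2 - 1) * (X + 1) ^ (3 * n / 2 - 2) *
        (X ^ 3 - C ((n : ℝ) - 1) * X ^ 2 - C (2 * (n : ℝ) + 1) * X
          + C (2 * (n : ℝ) ^ 2 - 5 * (n : ℝ) - 1)) := by
  obtain ⟨m, rfl⟩ := heven
  have hm : 2 ≤ m := by omega
  have e1 : (m + m) / 2 - 1 = m + 2 - 3 := by omega
  have e2 : 3 * (m + m) / 2 - 2 = 2 * (m + m) - (m + 2) := by omega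
  rw [adjJoinEven_eq_submatrix_sub m, charpoly_sub_scalar,
    charpoly_submatrix_of_card_fiber _ _ _ (card_cliqueIndex_fiber m hm) (by simp; omega),
    diagonal_mul_cliqueMatrix m hm, charpoly_sub_scalar,
    charpoly_submatrix_of_card_fiber _ _ _ (card_cliqueType_fiber m) (by simp; omega),
    charpoly_diagonal_mul_typeMatrix, e1, e2]
  have h2 : C (2 : ℝ) = 2 := map_ofNat C 2
  have h4 : C (4 : ℝ) = 4 := map_ofNat C 4
  have h5 : C (5 : ℝ) = 5 := map_ofNat C 5
  have h8 : C (8 : ℝ) = 8 := map_ofNat C 8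
  have hX : (X + 1 + -2 : ℝ[X]) = X - 1 := by ring
  simp [h2, h4, h5, h8, hX]
  ring
end

section
/- Let n ≥ 2 be even. The spectrum of the conjugacy supercommuting graph of the dicyclic group Q_{4n} consists of -1 with multiplicity 4n-4, the simple eigenvalue n-1, and the three roots of x³ + (3-3n)x² + (2n²-10n+3)x + 10n² - 15n + 1 = 0. -/
/-!
Write `A` for the adjacency matrix. Colour the elements of `Q_{4n}` by four classes: the centre
`{1, aⁿ}` (size `2`), the other powers of `a` (size `2n - 2`), and the elements `x aⁱ` with `i`
even, resp. odd (size `n` each). Each class is closed under conjugation: powers of `a` are at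
most inverted, and the exponent of `x aⁱ` keeps its parity. Elements `x aⁱ` and `x aʲ` commute only
if `2 (i - j) = 0`, so `i - j ∈ {0, n}`, and as `n` is even this forces equal parity; an `x aⁱ`
commutes with a power of `a` only if the latter is central. Hence `A + 1` depends only on the
classes: it equals `P B Pᵀ`, where `P` is the `4n × 4` class indicator matrix and `B` is the
`4 × 4` pattern of the graph in which the centre is joined to everything and the other classes
are joined only to themselves (`adj_eq`).

Since `Pᵀ P` is the diagonal matrix `D` of class sizes, `charpoly (P B Pᵀ)` is `X ^ (4n - 4)` times
`charpoly (B D)` (`Matrix.charpoly_mul_comm_of_le`). Translating by `1` gives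
`charpoly A = (X + 1) ^ (4n - 4) * charpoly (B D - 1)`, and the last factor is a `4 × 4`
determinant equal to `(X - (n - 1))` times the stated cubic.
-/

open Matrix Polynomial
open scoped Classical

/-- Adjacency matrix (over `ℂ`) of the conjugacy supercommuting graph of a group `G`:
distinct vertices `g, h` are adjacent iff they are conjugate, or some element conjugate
to `g` and some element conjugate to `h` are adjacent in the commuting graph of `G`. -/
noncomputable def cscomAdj (G : Type*) [Group G] : Matrix G G ℂ :=
  Matrix.of fun g h =>
    if g ≠ h ∧ (IsConj g h ∨
        ∃ x y : G, IsConj g x ∧ IsConj h y ∧ x ≠ y ∧ Commute x y) then 1 else 0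

namespace CSComDicyclic

open QuaternionGroup

/-- Reduction of exponents modulo `2`. -/
noncomputable def par (n : ℕ) : ZMod (2 * n) →+* ZMod 2 :=
  ZMod.castHom (dvd_mul_right 2 n) (ZMod 2)

/-- The class of an element: `0` for central elements, `1` for the other powers of `a`,
`2` and `3` for the elements `x aⁱ` with `i` even and odd respectively. -/
noncomputable def cls {n : ℕ} : QuaternionGroup n → Fin 4
  | a i => if i + i = 0 then 0 else 1
  | xa i => if par n i = 0 then 2 else 3

/-- The pattern of `A + 1`: class `0` is joined to every class, each class is joined to itself. -/
def pat : Matrix (Fin 4) (Fin 4) ℂ :=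
  !![1, 1, 1, 1; 1, 1, 0, 0; 1, 0, 1, 0; 1, 0, 0, 1]

/-- The class indicator matrix. -/
noncomputable def ind (n : ℕ) : Matrix (QuaternionGroup n) (Fin 4) ℂ :=
  Matrix.of fun g i => if cls g = i then 1 else 0

/-- The class sizes. -/
noncomputable def size (n : ℕ) : Fin 4 → ℂ := ![2, 2 * n - 2, n, n]

lemma pat_apply (i j : Fin 4) : pat i j = if i = 0 ∨ j = 0 ∨ i = j then 1 else 0 := by
  fin_cases i <;> fin_cases j <;> simp [pat]

lemma add_self_eq_zero_iff {n : ℕ} [NeZero n] (i : ZMod (2 * n)) :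
    i + i = 0 ↔ i = 0 ∨ i = (n : ZMod (2 * n)) := by
  have hn : 0 < n := Nat.pos_of_ne_zero (NeZero.ne n)
  constructor
  · intro h
    have hlt := ZMod.val_lt i
    rw [← ZMod.natCast_zmod_val i] at h ⊢
    have h2 : ((i.val + i.val : ℕ) : ZMod (2 * n)) = 0 := by push_cast; exact h
    obtain ⟨k, hk⟩ := (ZMod.natCast_eq_zero_iff _ _).1 h2
    have hk' : i.val = n * k := by linarith
    have : k < 2 := by nlinarith
    interval_cases k
    · left; simp [hk']
    · right; simp [hk']
  · rintro (rfl | rfl)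
    · simp
    · have := ZMod.natCast_self (2 * n)
      push_cast at this
      linear_combination this

lemma par_natCast {n : ℕ} (heven : Even n) : par n (n : ZMod (2 * n)) = 0 := by
  rw [map_natCast]
  exact ZMod.natCast_eq_zero_iff_even.2 heven

lemma par_eq_zero_of_add_self {n : ℕ} [NeZero n] (heven : Even n) {i : ZMod (2 * n)}
    (h : i + i = 0) : par n i = 0 := by
  rcases (add_self_eq_zero_iff i).1 h with rfl | rfl
  · simp
  · exact par_natCast heven

lemma par_add_self {n : ℕ} (i : ZMod (2 * n)) : par n (i + i) = 0 := by
  rw [map_add]; exact CharTwo.add_self_eq_zero _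

lemma exists_add_self {n : ℕ} [NeZero n] {i : ZMod (2 * n)} (h : par n i = 0) :
    ∃ k, i = k + k := by
  rw [← ZMod.natCast_zmod_val i, map_natCast, ZMod.natCast_eq_zero_iff_even] at h
  obtain ⟨k, hk⟩ := h
  refine ⟨k, ?_⟩
  rw [← ZMod.natCast_zmod_val i, hk]
  push_cast
  rfl

lemma zmod_two_cases (u : ZMod 2) : u = 0 ∨ u = 1 := by
  revert u; decide

lemma cls_xa_eq_iff {n : ℕ} (i j : ZMod (2 * n)) :
    cls (xa i) = cls (xa j) ↔ par n (j - i) = 0 := by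
  simp only [cls, map_sub]
  rcases zmod_two_cases (par n i) with h | h <;> rcases zmod_two_cases (par n j) with h' | h' <;>
    simp [h, h']

lemma cls_xa_ne_zero {n : ℕ} (i : ZMod (2 * n)) : cls (xa i) ≠ 0 := by
  simp only [cls]; split_ifs <;> decide

lemma cls_a_ne_cls_xa {n : ℕ} (i j : ZMod (2 * n)) : cls (a i) ≠ cls (xa j) := by
  simp only [cls]; split_ifs <;> decide

lemma cls_a_eq_zero_iff {n : ℕ} (i : ZMod (2 * n)) : cls (a i) = 0 ↔ i + i = 0 := by
  simp [cls]

lemma cls_eq_of_isConj {n : ℕ} {g h : QuaternionGroup n}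
    (hc : IsConj g h) : cls g = cls h := by
  obtain ⟨c, hc⟩ := isConj_iff.1 hc
  rw [mul_inv_eq_iff_eq_mul] at hc
  rcases g with i | i <;> rcases h with j | j <;> rcases c with k | k <;>
    simp only [a_mul_a, a_mul_xa, xa_mul_a, xa_mul_xa, a.injEq, xa.injEq, reduceCtorEq] at hc
  · have : i = j := by linear_combination hc
    rw [this]
  · have : i = -j := by linear_combination hc
    simp only [cls, this, ← neg_add, neg_eq_zero]
  · rw [cls_xa_eq_iff, show j - i = -(k + k) by linear_combination -hc, map_neg, par_add_self,
      neg_zero]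
  · rw [cls_xa_eq_iff, show j - i = (k - i) + (k - i) by linear_combination hc, par_add_self]

/-- Commuting elements lie in classes that are joined in the pattern. -/
lemma joined_of_commute {n : ℕ} [NeZero n] (heven : Even n) {g h : QuaternionGroup n}
    (hc : Commute g h) : cls g = 0 ∨ cls h = 0 ∨ cls g = cls h := by
  have hc : g * h = h * g := hc
  rcases g with i | i <;> rcases h with j | j <;>
    simp only [a_mul_a, a_mul_xa, xa_mul_a, xa_mul_xa, a.injEq, xa.injEq] at hc
  · by_cases hi : i + i = 0
    · exact Or.inl ((cls_a_eq_zero_iff i).2 hi)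
    · by_cases hj : j + j = 0
      · exact Or.inr (Or.inl ((cls_a_eq_zero_iff j).2 hj))
      · exact Or.inr (Or.inr (by simp [cls, hi, hj]))
  · exact Or.inl ((cls_a_eq_zero_iff i).2 (by linear_combination -hc))
  · exact Or.inr (Or.inl ((cls_a_eq_zero_iff j).2 (by linear_combination hc)))
  · refine Or.inr (Or.inr ((cls_xa_eq_iff i j).2 (par_eq_zero_of_add_self heven ?_)))
    linear_combination hc

lemma commute_of_cls_eq_zero {n : ℕ} {g : QuaternionGroup n} (hg : cls g = 0)
    (h : QuaternionGroup n) : Commute g h := by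
  change g * h = h * g
  rcases g with i | i
  · rw [cls_a_eq_zero_iff] at hg
    rcases h with j | j
    · simp [add_comm]
    · simp only [a_mul_xa, xa_mul_a, xa.injEq]
      linear_combination -hg
  · exact absurd hg (cls_xa_ne_zero i)

lemma isConj_or_commute {n : ℕ} [NeZero n] {g h : QuaternionGroup n}
    (hgh : cls g = cls h) : IsConj g h ∨ Commute g h := by
  rcases g with i | i <;> rcases h with j | j
  · right
    change a i * a j = a j * a i
    simp [add_comm]
  · exact absurd hgh (cls_a_ne_cls_xa i j)
  · exact absurd hgh.symm (cls_a_ne_cls_xa j i)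
  · left
    obtain ⟨k, hk⟩ := exists_add_self ((cls_xa_eq_iff i j).1 hgh)
    refine isConj_iff.2 ⟨a (-k), ?_⟩
    rw [mul_inv_eq_iff_eq_mul, a_mul_xa, xa_mul_a, xa.injEq]
    linear_combination -hk

/-- The adjacency matrix of the graph is the blown-up pattern with the diagonal removed. -/
lemma adj_eq {n : ℕ} [NeZero n] (heven : Even n) :
    cscomAdj (QuaternionGroup n) = ind n * (pat * (ind n)ᵀ) - scalar _ 1 := by
  ext g h
  have hP : (ind n * (pat * (ind n)ᵀ)) g h = pat (cls g) (cls h) := by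
    simp [Matrix.mul_apply, ind]
  have key : (IsConj g h ∨ ∃ x y : QuaternionGroup n, IsConj g x ∧ IsConj h y ∧ x ≠ y ∧
      Commute x y) → (cls g = 0 ∨ cls h = 0 ∨ cls g = cls h) := by
    rintro (hc | ⟨x, y, hx, hy, -, hxy⟩)
    · exact Or.inr (Or.inr (cls_eq_of_isConj hc))
    · rw [cls_eq_of_isConj hx, cls_eq_of_isConj hy]
      exact joined_of_commute heven hxy
  rw [Matrix.sub_apply, hP, pat_apply]
  by_cases hgh : g = h
  · subst hgh
    simp [cscomAdj]
  · have key' : (cls g = 0 ∨ cls h = 0 ∨ cls g = cls h) → (IsConj g h ∨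
        ∃ x y : QuaternionGroup n, IsConj g x ∧ IsConj h y ∧ x ≠ y ∧ Commute x y) := by
      have hcomm : Commute g h → ∃ x y : QuaternionGroup n, IsConj g x ∧ IsConj h y ∧ x ≠ y ∧
          Commute x y := fun hc => ⟨g, h, IsConj.refl g, IsConj.refl h, hgh, hc⟩
      rintro (h0 | h0 | h0)
      · exact Or.inr (hcomm (commute_of_cls_eq_zero h0 h))
      · exact Or.inr (hcomm (commute_of_cls_eq_zero h0 g).symm)
      · exact (isConj_or_commute h0).imp id hcomm
    simp only [cscomAdj, Matrix.of_apply, ne_eq, hgh, not_false_eq_true, true_and,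
      iff_iff_eq.1 (Iff.intro key key'), Matrix.scalar_apply, Matrix.diagonal_apply, if_false,
      sub_zero]

lemma sum_quaternion {n : ℕ} [NeZero n] (f : QuaternionGroup n → ℂ) :
    ∑ g, f g = ∑ i, f (a i) + ∑ i, f (xa i) := by
  let e : ZMod (2 * n) ⊕ ZMod (2 * n) ≃ QuaternionGroup n :=
    { toFun := Sum.elim a xa
      invFun := fun g => match g with
        | a i => Sum.inl i
        | xa i => Sum.inr i
      left_inv := by rintro (i | i) <;> rfl
      right_inv := by rintro (i | i) <;> rfl }
  rw [← e.sum_comp, Fintype.sum_sum_type]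
  rfl

lemma sum_central {n : ℕ} [NeZero n] :
    ∑ i : ZMod (2 * n), (if i + i = 0 then (1 : ℂ) else 0) = 2 := by
  have hne : (0 : ZMod (2 * n)) ≠ (n : ZMod (2 * n)) := by
    intro h
    have hn : 0 < n := Nat.pos_of_ne_zero (NeZero.ne n)
    have := Nat.le_of_dvd hn ((ZMod.natCast_eq_zero_iff n (2 * n)).1 h.symm)
    omega
  have hs : (Finset.univ.filter fun i : ZMod (2 * n) => i + i = 0) = {0, (n : ZMod (2 * n))} := by
    ext i; simp [add_self_eq_zero_iff]
  rw [Finset.sum_boole, hs, Finset.card_pair hne]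
  norm_num

lemma sum_ite_compl {n : ℕ} [NeZero n] (p : ZMod (2 * n) → Prop)
    [DecidablePred p] :
    ∑ i, (if p i then (0 : ℂ) else 1) = 2 * n - ∑ i, (if p i then (1 : ℂ) else 0) := by
  rw [eq_sub_iff_add_eq, ← Finset.sum_add_distrib]
  have : ∀ i, ((if p i then (0 : ℂ) else 1) + if p i then (1 : ℂ) else 0) = 1 := by
    intro i; split_ifs <;> simp
  simp [this, ZMod.card]

lemma sum_even {n : ℕ} [NeZero n] :
    ∑ i : ZMod (2 * n), (if par n i = 0 then (1 : ℂ) else 0) = n := by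
  have h := sum_ite_compl (fun i : ZMod (2 * n) => par n i = 0)
  -- Translation by `1` exchanges even and odd exponents.
  have h' : ∑ i : ZMod (2 * n), (if par n i = 0 then (0 : ℂ) else 1) =
      ∑ i : ZMod (2 * n), (if par n i = 0 then (1 : ℂ) else 0) := by
    rw [← Equiv.sum_comp (Equiv.addRight (1 : ZMod (2 * n)))
      (fun i => if par n i = 0 then (1 : ℂ) else 0)]
    refine Finset.sum_congr rfl fun i _ => ?_
    simp only [Equiv.coe_addRight, map_add, map_one]
    rcases zmod_two_cases (par n i) with hi | hi <;> simp [hi, CharTwo.add_self_eq_zero]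
  rw [h'] at h
  linear_combination h / 2

lemma ind_transpose_mul_ind {n : ℕ} [NeZero n] :
    (ind n)ᵀ * ind n = Matrix.diagonal (size n) := by
  have hcount : ∀ j : Fin 4, ∑ g : QuaternionGroup n, (if cls g = j then (1 : ℂ) else 0) =
      size n j := by
    have h1 := sum_central (n := n)
    have h2 := sum_ite_compl (fun i : ZMod (2 * n) => i + i = 0)
    have h3 := sum_even (n := n)
    have h4 := sum_ite_compl (fun i : ZMod (2 * n) => par n i = 0)
    rw [h1] at h2
    rw [h3] at h4
    intro j
    rw [sum_quaternion]
    have hA : ∀ i : ZMod (2 * n), (if cls (a i) = j then (1 : ℂ) else 0) =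
        if i + i = 0 then (if j = 0 then 1 else 0) else (if j = 1 then 1 else 0) := by
      intro i; by_cases hi : i + i = 0 <;> simp [cls, hi, eq_comm]
    have hB : ∀ i : ZMod (2 * n), (if cls (xa i) = j then (1 : ℂ) else 0) =
        if par n i = 0 then (if j = 2 then 1 else 0) else (if j = 3 then 1 else 0) := by
      intro i; by_cases hi : par n i = 0 <;> simp [cls, hi, eq_comm]
    simp only [hA, hB]
    fin_cases j
    · simpa [size] using h1
    · simpa [size] using h2
    · simpa [size] using h3
    · simp [size]
      linear_combination h4
  ext i j
  rw [Matrix.diagonal_apply, ← hcount i, Matrix.mul_apply]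
  simp only [ind, Matrix.transpose_apply, Matrix.of_apply]
  split_ifs with hij
  · subst hij
    refine Finset.sum_congr rfl fun g _ => ?_
    split_ifs <;> simp
  · refine Finset.sum_eq_zero fun g _ => ?_
    by_cases hg : cls g = i
    · simp [hg, hij]
    · simp [hg]

/-- The characteristic polynomial of the `4 × 4` quotient matrix. -/
lemma charpoly_quotient (n : ℕ) :
    (pat * Matrix.diagonal (size n) - scalar _ 1).charpoly =
      (X - C ((n : ℂ) - 1)) * (X ^ 3 + C (3 - 3 * (n : ℂ)) * X ^ 2
          + C (2 * (n : ℂ) ^ 2 - 10 * (n : ℂ) + 3) * X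
          + C (10 * (n : ℂ) ^ 2 - 15 * (n : ℂ) + 1)) := by
  have hM : pat * Matrix.diagonal (size n) - scalar _ 1 =
      !![1, 2 * (n : ℂ) - 2, n, n; 2, 2 * n - 3, 0, 0; 2, 0, n - 1, 0; 2, 0, 0, n - 1] := by
    ext i j
    rw [Matrix.sub_apply, Matrix.mul_diagonal]
    fin_cases i <;> fin_cases j <;> simp [pat, size] <;> ring
  rw [hM, Matrix.charpoly, Matrix.det_succ_row_zero]
  simp [Fin.sum_univ_succ, Matrix.det_fin_three, Matrix.charmatrix_apply, Fin.succAbove,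
    Matrix.diagonal_apply, -map_sub, -map_add, -map_mul]
  simp only [map_sub, map_add, map_mul, map_pow, map_natCast, map_ofNat, map_one]
  ring

lemma charpoly_adj {n : ℕ} [NeZero n] (heven : Even n) :
    (cscomAdj (QuaternionGroup n)).charpoly =
      (X - C (-1)) ^ (4 * n - 4) * ((X - C ((n : ℂ) - 1)) *
        (X ^ 3 + C (3 - 3 * (n : ℂ)) * X ^ 2
          + C (2 * (n : ℂ) ^ 2 - 10 * (n : ℂ) + 3) * X
          + C (10 * (n : ℂ) ^ 2 - 15 * (n : ℂ) + 1))) := by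
  have hn : 0 < n := Nat.pos_of_ne_zero (NeZero.ne n)
  rw [← charpoly_quotient, adj_eq heven, Matrix.charpoly_sub_scalar, Matrix.charpoly_sub_scalar,
    Matrix.charpoly_mul_comm_of_le _ _ (by rw [QuaternionGroup.card, Fintype.card_fin]; omega),
    Matrix.mul_assoc, ind_transpose_mul_ind, QuaternionGroup.card, Fintype.card_fin]
  simp

end CSComDicyclic


/-- For even `n ≥ 2`, the spectrum of the conjugacy supercommuting graph of the dicyclic
group `Q_{4n}` consists of `-1` with multiplicity `4n - 4`, the simple eigenvalue
`n - 1`, and the three roots of `x³ + (3-3n)x² + (2n²-10n+3)x + 10n² - 15n + 1 = 0`.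
(In Mathlib the dicyclic group of order `4n` is `QuaternionGroup n`.) -/
theorem spectrum_CSCom_dicyclic_even (n : ℕ) [NeZero n] (hn : 2 ≤ n) (heven : Even n) :
    (cscomAdj (QuaternionGroup n)).charpoly.roots =
      Multiset.replicate (4 * n - 4) (-1) + {(n : ℂ) - 1} +
        (X ^ 3 + C (3 - 3 * (n : ℂ)) * X ^ 2
          + C (2 * (n : ℂ) ^ 2 - 10 * (n : ℂ) + 3) * X
          + C (10 * (n : ℂ) ^ 2 - 15 * (n : ℂ) + 1)).roots := by
  rw [CSComDicyclic.charpoly_adj heven]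
  have hcubic : (X ^ 3 + C (3 - 3 * (n : ℂ)) * X ^ 2
      + C (2 * (n : ℂ) ^ 2 - 10 * (n : ℂ) + 3) * X
      + C (10 * (n : ℂ) ^ 2 - 15 * (n : ℂ) + 1)) ≠ 0 := by
    refine Polynomial.Monic.ne_zero ?_
    monicity!
  have hlin := mul_ne_zero (X_sub_C_ne_zero ((n : ℂ) - 1)) hcubic
  rw [roots_mul (mul_ne_zero (pow_ne_zero _ (X_sub_C_ne_zero _)) hlin), roots_mul hlin,
    roots_pow, roots_X_sub_C, roots_X_sub_C, Multiset.nsmul_singleton,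
    ← add_assoc (Multiset.replicate _ _)]
end

section
/- Let n ≥ 1 be odd. The spectrum of the conjugacy supercommuting graph of the dicyclic group Q_{4n} consists of -1 with multiplicity 4n-4 together with the four roots of x⁴ + (4-4n)x³ + (4n²-16n+6)x² + (16n²-28n+4)x + 12n² - 16n + 1 = 0. -/
/-!
Since `n` is odd, the conjugacy classes of the dicyclic group are `{1}`, `{aⁿ}`, the pairs
`{aⁱ, a⁻ⁱ}`, and two classes of size `n` of elements outside the rotation subgroup. The rotations
commute with each other; the two classes of non-rotations are joined because `xa i` commutes with
`xa (i + n)`; and a rotation is joined to a non-rotation only if it is central. So the graph is the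
union of two cliques, on the `2n` rotations and on the `2n + 2` elements that are central or
non-rotations, which share the two central vertices (`csRel_a_a`, `csRel_a_xa`, `csRel_xa_xa`).

By inclusion-exclusion the adjacency matrix `A` satisfies `A + 1 = U D Uᵀ`, where `U` has three
columns of indicator functions and `D = diag(1, 1, -1)` (`cscomAdj_dicyclic_eq`). As `U (D Uᵀ)` and
`(D Uᵀ) U` have the same characteristic polynomial up to a power of the variable, it remains to
compute the explicit `3 × 3` matrix `D Uᵀ U` (`gram_cellMat`) and shift the variable by one. This
gives `(X + 1) ^ (4n - 3)` times a cubic, and the cubic times `X + 1` is the stated quartic.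
-/

open Matrix Polynomial
open scoped Classical

/-- The involutive rotations: `a i` is central exactly when `i + i = 0`, i.e. `i = 0` or `i = n`. -/
lemma add_self_eq_zero_iff_dicyclic (n : ℕ) [NeZero n] (i : ZMod (2 * n)) :
    i + i = 0 ↔ i = 0 ∨ i = (n : ZMod (2 * n)) := by
  obtain ⟨k, hk, rfl⟩ : ∃ k : ℕ, k < 2 * n ∧ (k : ZMod (2 * n)) = i :=
    ⟨i.val, ZMod.val_lt i, ZMod.natCast_zmod_val i⟩
  have hn : 0 < n := NeZero.pos n
  constructor
  · intro h
    have h2 : ((k + k : ℕ) : ZMod (2 * n)) = 0 := by push_cast; exact h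
    rw [ZMod.natCast_eq_zero_iff] at h2
    obtain ⟨c, hc⟩ := h2
    have hc2 : c < 2 := by
      by_contra hcon
      have : 2 * n * 2 ≤ 2 * n * c := Nat.mul_le_mul_left _ (by omega)
      omega
    interval_cases c
    · left; have : k = 0 := by omega
      simp [this]
    · right; have : k = n := by omega
      simp [this]
  · have h0 : ((2 * n : ℕ) : ZMod (2 * n)) = 0 := ZMod.natCast_self _
    rintro (h | h) <;> rw [h]
    · simp
    · rw [← h0]; push_cast; ring

lemma sum_central_dicyclic (n : ℕ) [NeZero n] :
    (∑ i : ZMod (2 * n), if i + i = 0 then (1 : ℂ) else 0) = 2 := by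
  have hn : 0 < n := NeZero.pos n
  have hne : (0 : ZMod (2 * n)) ≠ (n : ZMod (2 * n)) := by
    intro h
    have h' := h.symm
    rw [ZMod.natCast_eq_zero_iff] at h'
    have := Nat.le_of_dvd hn h'
    omega
  have : (Finset.univ.filter fun i : ZMod (2 * n) => i + i = 0) = {0, (n : ZMod (2 * n))} := by
    ext i; simp [add_self_eq_zero_iff_dicyclic]
  rw [Finset.sum_boole, this, Finset.card_pair hne]
  norm_num

lemma sum_dicyclic (n : ℕ) [NeZero n] (f : QuaternionGroup n → ℂ) :
    ∑ g, f g = ∑ i, f (.a i) + ∑ i, f (.xa i) := by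
  let e : ZMod (2 * n) ⊕ ZMod (2 * n) ≃ QuaternionGroup n :=
    { toFun := Sum.elim .a .xa
      invFun := fun g => match g with
        | .a i => Sum.inl i
        | .xa i => Sum.inr i
      left_inv := by rintro (x | x) <;> rfl
      right_inv := by rintro (x | x) <;> rfl }
  rw [← e.sum_comp, Fintype.sum_sum_type]
  rfl

/-- A conjugate of the rotation `a i` is `a i` or `a (-i)`. -/
lemma isConj_a_dicyclic {n : ℕ} {i : ZMod (2 * n)} {x : QuaternionGroup n}
    (h : IsConj (.a i) x) : x = .a i ∨ x = .a (-i) := by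
  obtain ⟨c, hc⟩ := isConj_iff.1 h
  rw [mul_inv_eq_iff_eq_mul] at hc
  rcases c with c | c <;> rcases x with x | x <;>
    simp only [QuaternionGroup.a_mul_a, QuaternionGroup.a_mul_xa, QuaternionGroup.xa_mul_a,
      QuaternionGroup.xa_mul_xa, QuaternionGroup.a.injEq, QuaternionGroup.xa.injEq,
      reduceCtorEq] at hc
  · left; congr 1; linear_combination -hc
  · right; congr 1; linear_combination hc

lemma isConj_xa_dicyclic {n : ℕ} {j : ZMod (2 * n)} {x : QuaternionGroup n}
    (h : IsConj (.xa j) x) : ∃ k, x = .xa k := by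
  rcases x with x | x
  · rcases isConj_a_dicyclic h.symm with h | h <;> cases h
  · exact ⟨x, rfl⟩

lemma isConj_xa_add_dicyclic {n : ℕ} (i k : ZMod (2 * n)) :
    IsConj (QuaternionGroup.xa i) (.xa (i + 2 * k)) := by
  rw [isConj_iff]
  refine ⟨.a (-k), ?_⟩
  rw [mul_inv_eq_iff_eq_mul]
  simp only [QuaternionGroup.a_mul_xa, QuaternionGroup.xa_mul_a]
  congr 1; ring

/-- A rotation commutes with a non-rotation only if it is central. -/
lemma commute_a_xa_dicyclic {n : ℕ} (i j : ZMod (2 * n)) :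
    Commute (QuaternionGroup.a i) (.xa j) ↔ i + i = 0 := by
  rw [Commute, SemiconjBy]
  simp only [QuaternionGroup.a_mul_xa, QuaternionGroup.xa_mul_a, QuaternionGroup.xa.injEq]
  constructor <;> intro h <;> linear_combination -h

/-- For odd `n`, the residues modulo `2n` split into the even ones and the translates of these
by `n`. -/
lemma even_or_dicyclic {n : ℕ} (hodd : Odd n) [NeZero n] (m : ZMod (2 * n)) :
    ∃ k, m = 2 * k ∨ m = n + 2 * k := by
  obtain ⟨k, rfl⟩ := ZMod.natCast_zmod_surjective m
  obtain ⟨r, hr⟩ := hodd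
  have h0 : ((n : ZMod (2 * n))) = 2 * r + 1 := by exact_mod_cast congrArg Nat.cast hr
  rcases Nat.even_or_odd' k with ⟨c, hc | hc⟩
  · exact ⟨c, Or.inl (by exact_mod_cast congrArg Nat.cast hc)⟩
  · refine ⟨(c : ZMod (2 * n)) - r, Or.inr ?_⟩
    rw [h0, hc]; push_cast; ring

/-- The adjacency relation of the conjugacy supercommuting graph, without the requirement that
the two vertices be distinct. -/
def CSRel {G : Type*} [Group G] (g h : G) : Prop :=
  IsConj g h ∨ ∃ x y : G, IsConj g x ∧ IsConj h y ∧ x ≠ y ∧ Commute x y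

lemma CSRel.symm {G : Type*} [Group G] {g h : G} (H : CSRel g h) : CSRel h g := by
  rcases H with H | ⟨x, y, hx, hy, hne, hc⟩
  · exact Or.inl H.symm
  · exact Or.inr ⟨y, x, hy, hx, hne.symm, hc.symm⟩

lemma csRel_a_a {n : ℕ} (i j : ZMod (2 * n)) : CSRel (QuaternionGroup.a i) (.a j) := by
  by_cases h : i = j
  · subst h; exact Or.inl (IsConj.refl _)
  · refine Or.inr ⟨_, _, IsConj.refl _, IsConj.refl _, by simpa using h, ?_⟩
    rw [Commute, SemiconjBy, QuaternionGroup.a_mul_a, QuaternionGroup.a_mul_a, add_comm]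

lemma csRel_a_xa {n : ℕ} (i j : ZMod (2 * n)) :
    CSRel (QuaternionGroup.a i) (.xa j) ↔ i + i = 0 := by
  constructor
  · rintro (h | ⟨x, y, hx, hy, -, hc⟩)
    · rcases isConj_a_dicyclic h with h | h <;> cases h
    · obtain ⟨k, rfl⟩ := isConj_xa_dicyclic hy
      rcases isConj_a_dicyclic hx with rfl | rfl <;> rw [commute_a_xa_dicyclic] at hc
      · exact hc
      · linear_combination -hc
  · intro h
    exact Or.inr ⟨_, _, IsConj.refl _, IsConj.refl _, by simp, (commute_a_xa_dicyclic i j).2 h⟩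

/-- The two conjugacy classes of non-rotations are joined, since `xa i` commutes with
`xa (i + n)`, which lies in the other class because `n` is odd. -/
lemma csRel_xa_xa {n : ℕ} (hodd : Odd n) [NeZero n] (i j : ZMod (2 * n)) :
    CSRel (QuaternionGroup.xa i) (.xa j) := by
  obtain ⟨k, hk | hk⟩ := even_or_dicyclic hodd (j - i)
  · left
    have : j = i + 2 * k := by linear_combination hk
    rw [this]; exact isConj_xa_add_dicyclic i k
  · right
    have hj : j = (i + n) + 2 * k := by linear_combination hk
    have hnn : (n : ZMod (2 * n)) + n = 0 := (add_self_eq_zero_iff_dicyclic n _).2 (Or.inr rfl)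
    have hn0 : (n : ZMod (2 * n)) ≠ 0 := by
      rw [Ne, ZMod.natCast_eq_zero_iff]
      intro h
      have hn : 0 < n := NeZero.pos n
      have := Nat.le_of_dvd hn h
      omega
    refine ⟨.xa i, .xa (i + n), IsConj.refl _, ?_, ?_, ?_⟩
    · rw [hj]; exact (isConj_xa_add_dicyclic _ k).symm
    · simpa using hn0
    · rw [Commute, SemiconjBy, QuaternionGroup.xa_mul_xa, QuaternionGroup.xa_mul_xa]
      congr 1; linear_combination hnn

/-- The columns are the indicator functions of the rotation subgroup, of the union of the centre
with the non-rotations, and of the centre. -/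
noncomputable def cellMat (n : ℕ) : Matrix (QuaternionGroup n) (Fin 3) ℂ :=
  Matrix.of fun g => match g with
    | .a i => ![1, if i + i = 0 then 1 else 0, if i + i = 0 then 1 else 0]
    | .xa _ => ![0, 1, 0]

/-- Inclusion-exclusion: being adjacent or equal means lying in a common clique, the two maximal
cliques being the rotations and the union of the centre with the non-rotations; these meet in the
centre, which is therefore subtracted. -/
lemma cscomAdj_dicyclic_eq {n : ℕ} (hodd : Odd n) [NeZero n] :
    cscomAdj (QuaternionGroup n) =
      cellMat n * (Matrix.diagonal (![1, 1, -1] : Fin 3 → ℂ) * (cellMat n)ᵀ) - 1 := by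
  ext g h
  have key : cscomAdj (QuaternionGroup n) g h
      = (if CSRel g h then 1 else 0) - (1 : Matrix _ _ ℂ) g h := by
    rw [Matrix.one_apply]
    by_cases hgh : g = h
    · subst hgh
      have : CSRel g g := Or.inl (IsConj.refl _)
      simp [cscomAdj, this]
    · simp [cscomAdj, hgh, CSRel]
  rw [key, Matrix.sub_apply]
  congr 1
  rw [Matrix.mul_apply, Fin.sum_univ_three]
  simp only [Matrix.diagonal_mul, Matrix.transpose_apply]
  rcases g with i | i <;> rcases h with j | j
  · rw [if_pos (csRel_a_a i j)]; simp [cellMat]; split_ifs <;> simp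
  · simp only [csRel_a_xa]; simp [cellMat]
  · rw [show CSRel (QuaternionGroup.xa i) (.a j) ↔ j + j = 0 from
      ⟨fun h => (csRel_a_xa j i).1 h.symm, fun h => ((csRel_a_xa j i).2 h).symm⟩]
    simp [cellMat]
  · rw [if_pos (csRel_xa_xa hodd i j)]; simp [cellMat]

lemma gram_cellMat (n : ℕ) [NeZero n] :
    (Matrix.diagonal (![1, 1, -1] : Fin 3 → ℂ) * (cellMat n)ᵀ) * cellMat n =
      !![2 * (n : ℂ), 2, 2; 2, 2 * n + 2, 2; -2, -2, -2] := by
  have h2 := sum_central_dicyclic n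
  have h3 : (∑ i : ZMod (2 * n), if i + i = 0 then (if i + i = 0 then (1 : ℂ) else 0) else 0) = 2 := by
    rw [← h2]; exact Finset.sum_congr rfl fun i _ => by split_ifs <;> rfl
  rw [Matrix.mul_assoc]
  ext p q
  rw [Matrix.diagonal_mul, Matrix.mul_apply, sum_dicyclic]
  fin_cases p <;> fin_cases q <;>
    simp [cellMat, -Finset.sum_boole, h2, h3, ZMod.card] <;> ring

/-- Subtracting the identity from a matrix shifts the variable of its characteristic polynomial. -/
lemma charpoly_sub_one_eq_comp {ι : Type*} [Fintype ι] [DecidableEq ι] (M : Matrix ι ι ℂ) :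
    (M - 1).charpoly = M.charpoly.comp (X + 1) := by
  simpa using Matrix.charpoly_sub_scalar M 1

/-- For odd `n ≥ 1`, the spectrum of the conjugacy supercommuting graph of the dicyclic
group `Q_{4n}` consists of `-1` with multiplicity `4n - 4` together with the four roots
of `x⁴ + (4-4n)x³ + (4n²-16n+6)x² + (16n²-28n+4)x + 12n² - 16n + 1 = 0`.
(In Mathlib the dicyclic group of order `4n` is `QuaternionGroup n`.) -/
theorem spectrum_CSCom_dicyclic_odd (n : ℕ) [NeZero n] (hn : 1 ≤ n) (hodd : Odd n) :
    (cscomAdj (QuaternionGroup n)).charpoly.roots =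
      Multiset.replicate (4 * n - 4) (-1) +
        (X ^ 4 + C (4 - 4 * (n : ℂ)) * X ^ 3
          + C (4 * (n : ℂ) ^ 2 - 16 * (n : ℂ) + 6) * X ^ 2
          + C (16 * (n : ℂ) ^ 2 - 28 * (n : ℂ) + 4) * X
          + C (12 * (n : ℂ) ^ 2 - 16 * (n : ℂ) + 1)).roots := by
  have hfac : (cscomAdj (QuaternionGroup n)).charpoly = (X - C (-1)) ^ (4 * n - 4) *
        (X ^ 4 + C (4 - 4 * (n : ℂ)) * X ^ 3
          + C (4 * (n : ℂ) ^ 2 - 16 * (n : ℂ) + 6) * X ^ 2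
          + C (16 * (n : ℂ) ^ 2 - 28 * (n : ℂ) + 4) * X
          + C (12 * (n : ℂ) ^ 2 - 16 * (n : ℂ) + 1)) := by
    have hcard : Fintype.card (Fin 3) ≤ Fintype.card (QuaternionGroup n) := by
      rw [QuaternionGroup.card, Fintype.card_fin]; omega
    rw [cscomAdj_dicyclic_eq hodd, charpoly_sub_one_eq_comp,
      Matrix.charpoly_mul_comm_of_le _ _ hcard,
      gram_cellMat, QuaternionGroup.card, Fintype.card_fin]
    -- One further factor `X + 1` is needed to turn the cubic of the quotient into the quartic.
    rw [show 4 * n - 3 = (4 * n - 4) + 1 by omega]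
    apply Polynomial.funext
    intro t
    rw [eval_comp, eval_mul, Matrix.eval_charpoly, Matrix.det_fin_three]
    simp
    ring
  have hm : (X ^ 4 + C (4 - 4 * (n : ℂ)) * X ^ 3
          + C (4 * (n : ℂ) ^ 2 - 16 * (n : ℂ) + 6) * X ^ 2
          + C (16 * (n : ℂ) ^ 2 - 28 * (n : ℂ) + 4) * X
          + C (12 * (n : ℂ) ^ 2 - 16 * (n : ℂ) + 1)) ≠ 0 := by
    intro h0
    rw [h0, mul_zero] at hfac
    exact (Matrix.charpoly_monic _).ne_zero hfac
  rw [hfac, roots_mul (mul_ne_zero (pow_ne_zero _ (X_sub_C_ne_zero _)) hm), roots_pow,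
    roots_X_sub_C, Multiset.nsmul_singleton]
end
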